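/- There exists a constant C > 0 such that for all sufficiently large real x, writing y = log log x, the number of primes p ≤ x for which D_y(p²−1) does not divide L_y is at most C · x / (y^{1/2} · log x). In particular this count is o(π(x)). -/

import Mathlib

open Filter Topology

/-- `Ly y` is the least common multiple of all positive integers `m ≤ y`. -/
noncomputable def Ly (y : ℝ) : ℕ := (Finset.Icc 1 ⌊y⌋₊).lcm id

/-- `Dy y n` is the largest `y`-smooth divisor of `n`: the largest divisor of `n`
all of whose prime factors are at most `y`. -/
noncomputable def Dy (y : ℝ) (n : ℕ) : ℕ :=
  ∏ q ∈ n.primeFactors.filter (fun q : ℕ => (q : ℝ) ≤ y), q ^ n.factorization q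

lemma T1_exists_c (d B : ℕ) (hB : 0 < B) (h : Nat.Coprime d B) (a : ℤ) :
    ∃ c : ℕ, (B : ℤ) ∣ (d : ℤ) * c - a := by
  obtain ⟨u, v, huv⟩ := (Nat.isCoprime_iff_coprime.mpr h)
  refine ⟨((u * a) % B).toNat, ?_⟩
  have h0 : 0 ≤ (u * a) % (B : ℤ) := Int.emod_nonneg _ (by exact_mod_cast hB.ne')
  rw [Int.toNat_of_nonneg h0]
  have h1 := Int.emod_add_mul_ediv (u * a) B
  refine ⟨-(d * (u * a / B)) - v * a, ?_⟩
  have h2 : (u * a) % (B : ℤ) = u * a - B * (u * a / B) := by linarith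
  rw [h2]
  linear_combination a * huv

lemma T1_keyprod (q j N : ℕ) (hq : q.Prime) (hj : 1 ≤ j) (a : ℤ) (f : ℕ → ℕ)
    (hf : ∀ i, (f i : ℤ) = (q : ℤ) ^ j * (i + 1) + a)
    (hub : ∀ i, f i ≤ q ^ j * (i + 2)) (hpos : ∀ i, 0 < f i)
    (S : Finset ℕ) (hS : ∀ p ∈ S, p.Prime ∧ N < p ∧ ∃ i < N, p = f i) :
    ∏ p ∈ S, p ≤ (N + 1) * (q ^ j) ^ (2 * N) := by
  classical
  set d := q ^ j with hd
  set s := (N.factorial).factorization q with hs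
  set B := N.factorial / q ^ s with hB
  have hqB : q ^ s * B = N.factorial := Nat.ordProj_mul_ordCompl_eq_self _ _
  have hfac := N.factorial_pos
  have hBpos : 0 < B := Nat.pos_of_ne_zero (by rintro h; rw [h] at hqB; omega)
  have hcop : Nat.Coprime d B := by
    apply Nat.Coprime.pow_left
    exact Nat.coprime_ordCompl hq hfac.ne'
  have hsN : s ≤ N := by
    have := Fact.mk hq
    have := padicValNat_factorial_le q N
    rwa [hs, Nat.factorization_def _ hq]
  obtain ⟨c, hc⟩ := T1_exists_c d B hBpos hcop a
  have hBA : B ∣ ∏ i ∈ Finset.range N, f i := by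
    have h1 : (∏ i ∈ Finset.range N, (f i : ℤ)) ≡
        ∏ i ∈ Finset.range N, ((d : ℤ) * ((c + 1 + i : ℕ) : ℤ)) [ZMOD B] := by
      apply Int.ModEq.prod
      intro i _
      rw [Int.modEq_iff_dvd, hf i]
      have : (d : ℤ) * ((c + 1 + i : ℕ) : ℤ) - ((q : ℤ) ^ j * (i + 1) + a) = d * c - a := by
        rw [hd]; push_cast; ring
      rw [this]; exact hc
    have h2 : (B : ℤ) ∣ ∏ i ∈ Finset.range N, ((d : ℤ) * ((c + 1 + i : ℕ) : ℤ)) := by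
      rw [Finset.prod_mul_distrib]
      apply Dvd.dvd.mul_left
      rw [← Nat.cast_prod, ← Nat.ascFactorial_eq_prod_range]
      exact_mod_cast (Dvd.intro_left _ hqB).trans (Nat.factorial_dvd_ascFactorial (c+1) N)
    have h3 : (B : ℤ) ∣ ∏ i ∈ Finset.range N, (f i : ℤ) := h1.dvd_iff.mpr h2
    rw [← Nat.cast_prod] at h3
    exact_mod_cast h3
  have hSA : ∏ p ∈ S, p ∣ ∏ i ∈ Finset.range N, f i := by
    apply Finset.prod_primes_dvd
    · intro p hp; exact (hS p hp).1.prime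
    · intro p hp
      obtain ⟨i, hi, rfl⟩ := (hS p hp).2.2
      exact Finset.dvd_prod_of_mem f (Finset.mem_range.mpr hi)
  have hcop2 : Nat.Coprime (∏ p ∈ S, p) B := by
    apply Nat.Coprime.prod_left
    intro p hp
    obtain ⟨hpp, hNp, _⟩ := hS p hp
    apply Nat.Coprime.coprime_dvd_right (Dvd.intro_left _ hqB)
    exact (Nat.coprime_factorial_iff hpp.one_lt.ne').mpr (by rw [hpp.minFac_eq]; exact hNp)
  have hdvd := hcop2.mul_dvd_of_dvd_of_dvd hSA hBA
  have hApos : 0 < ∏ i ∈ Finset.range N, f i := Finset.prod_pos fun i _ => hpos i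
  have hle := Nat.le_of_dvd hApos hdvd
  have hAub : ∏ i ∈ Finset.range N, f i ≤ d ^ N * (N + 1).factorial := by
    calc _ ≤ ∏ i ∈ Finset.range N, d * (i + 2) := Finset.prod_le_prod' fun i _ => hub i
      _ = d ^ N * (N + 1).factorial := by
        rw [Finset.prod_mul_distrib, ← Finset.prod_range_add_one_eq_factorial,
          Finset.prod_range_succ']
        simp [add_assoc]
  have hqs : q ^ s ≤ d ^ N := by
    calc q ^ s ≤ q ^ N := Nat.pow_le_pow_right hq.pos hsN
      _ ≤ (q ^ j) ^ N := Nat.pow_le_pow_left (Nat.le_self_pow (by omega) q) N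
  have : (∏ p ∈ S, p) * B ≤ ((N + 1) * d ^ (2 * N)) * B := by
    calc _ ≤ d ^ N * (N + 1).factorial := hle.trans hAub
      _ = d ^ N * (N + 1) * (q ^ s) * B := by rw [Nat.factorial_succ, ← hqB]; ring
      _ ≤ d ^ N * (N + 1) * (d ^ N) * B := by gcongr
      _ = _ := by ring
  exact Nat.le_of_mul_le_mul_right this hBpos

lemma T1_pi_le {x : ℝ} (hx : 1 < x) : (Nat.primeCounting ⌊x⌋₊ : ℝ) * Real.log x ≤ 5 * x := by
  have h := Chebyshev.pi_le_log4_mul_div hx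
  have hs : 1 < √x := Real.lt_sqrt_of_sq_lt (by simpa using hx)
  have hl : 0 < Real.log √x := Real.log_pos hs
  have hlx : Real.log x = 2 * Real.log √x := by rw [Real.log_sqrt (by linarith)]; ring
  have h4 : Real.log 4 < 1.4 := by
    rw [show (4:ℝ) = 2 ^ 2 by norm_num, Real.log_pow]; have := Real.log_two_lt_d9
    push_cast; linarith
  have hl2 := Real.log_le_sub_one_of_pos (show 0 < √x by linarith)
  have hsq : √x * √x = x := Real.mul_self_sqrt (by linarith)
  rw [hlx]
  calc _ ≤ (Real.log 4 * x / Real.log √x + √x) * (2 * Real.log √x) := by gcongr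
    _ = 2 * (Real.log 4 * x) + 2 * √x * Real.log √x := by field_simp
    _ ≤ 5 * x := by nlinarith

/-- primes `≤ X` congruent to `a` -/
lemma T1_count_one (q j N : ℕ) (hq : q.Prime) (hj : 1 ≤ j) (hN : 2 ≤ N) (a : ℤ) (f : ℕ → ℕ)
    (hf : ∀ i, (f i : ℤ) = (q : ℤ) ^ j * (i + 1) + a)
    (hub : ∀ i, f i ≤ q ^ j * (i + 2)) (hpos : ∀ i, 0 < f i)
    (P : Finset ℕ) (hP : ∀ p ∈ P, p.Prime ∧ ∃ i < N, p = f i) :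
    (P.card : ℝ) * Real.log N ≤ N * (6 + 2 * Real.log ((q ^ j : ℕ) : ℝ)) := by
  classical
  have hN2 : (2 : ℝ) ≤ N := by exact_mod_cast hN
  have hlN : 0 < Real.log N := Real.log_pos (by linarith)
  have hcard : P.card ≤ (Nat.primesLE N).card + (P.filter (fun p => N < p)).card := by
    rw [← Finset.card_filter_add_card_filter_not (s := P) (fun p => N < p), add_comm]
    gcongr
    intro p hp
    simp only [Finset.mem_filter, not_lt] at hp
    exact Nat.mem_primesLE.mpr ⟨hp.2, (hP p hp.1).1⟩
  rw [Nat.primesLE_card_eq_primeCounting] at hcard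
  set S := P.filter (fun p => N < p) with hS
  have hSS : ∀ p ∈ S, p.Prime ∧ N < p ∧ ∃ i < N, p = f i := by
    intro p hp
    simp only [hS, Finset.mem_filter] at hp
    exact ⟨(hP p hp.1).1, hp.2, (hP p hp.1).2⟩
  have hprod := T1_keyprod q j N hq hj a f hf hub hpos S hSS
  have hSlog : (S.card : ℝ) * Real.log N ≤ Real.log (∏ p ∈ S, (p : ℝ)) := by
    rw [Real.log_prod (fun p hp => by exact_mod_cast (hSS p hp).1.pos.ne'), ← nsmul_eq_mul]
    apply Finset.card_nsmul_le_sum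
    intro p hp
    apply Real.log_le_log (by linarith)
    exact_mod_cast (hSS p hp).2.1.le
  have hd : 0 < q ^ j := pow_pos hq.pos j
  have hlog2 : Real.log (∏ p ∈ S, (p : ℝ)) ≤ N + 2 * N * Real.log ((q ^ j : ℕ) : ℝ) := by
    calc _ ≤ Real.log (((N + 1) * (q ^ j) ^ (2 * N) : ℕ) : ℝ) := by
          apply Real.log_le_log
          · exact Finset.prod_pos fun p hp => by exact_mod_cast (hSS p hp).1.pos
          · rw [← Nat.cast_prod]; exact_mod_cast hprod
      _ = Real.log (N + 1) + 2 * N * Real.log ((q ^ j : ℕ) : ℝ) := by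
          rw [Nat.cast_mul, Real.log_mul (by positivity) (by positivity), Nat.cast_pow (q ^ j),
            Real.log_pow]
          push_cast; ring
      _ ≤ _ := by
          have := Real.log_le_sub_one_of_pos (show (0:ℝ) < N + 1 by positivity)
          linarith
  have hpi := T1_pi_le (x := N) (by linarith)
  rw [Nat.floor_natCast] at hpi
  have hc : (P.card : ℝ) ≤ Nat.primeCounting N + S.card := by exact_mod_cast hcard
  nlinarith

lemma T1_count (q j X : ℕ) (hq : q.Prime) (hj : 1 ≤ j) (hN : 2 ≤ (X + 1) / q ^ j) :
    (((Nat.primesLE X).filter (fun p => q ^ j ∣ p - 1 ∨ q ^ j ∣ p + 1)).card : ℝ) *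
      Real.log (((X + 1) / q ^ j : ℕ) : ℝ) ≤
      2 * ((((X + 1) / q ^ j : ℕ) : ℝ) * (6 + 2 * Real.log ((q ^ j : ℕ) : ℝ))) := by
  classical
  have hd : 2 ≤ q ^ j := hq.two_le.trans (Nat.le_self_pow (by omega) q)
  have h1 := T1_count_one q j ((X + 1) / q ^ j) hq hj hN 1 (fun i => q ^ j * (i + 1) + 1)
    (by intro i; push_cast; ring) (by intro i; nlinarith) (by intro i; positivity)
    ((Nat.primesLE X).filter (fun p => q ^ j ∣ p - 1)) (by
      intro p hp
      rw [Finset.mem_filter, Nat.mem_primesLE] at hp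
      obtain ⟨⟨hpX, hpp⟩, m, hm⟩ := hp
      have := hpp.two_le
      have hm0 : m ≠ 0 := by rintro rfl; omega
      obtain ⟨i, rfl⟩ := Nat.exists_eq_succ_of_ne_zero hm0
      refine ⟨hpp, i, ?_, ?_⟩
      · rw [← Nat.succ_le_iff, Nat.le_div_iff_mul_le (by omega), mul_comm]; omega
      · show p = q ^ j * (i.succ) + 1
        omega)
  have hge : ∀ i, 2 ≤ q ^ j * (i + 1) := fun i => by nlinarith
  have h2 := T1_count_one q j ((X + 1) / q ^ j) hq hj hN (-1) (fun i => q ^ j * (i + 1) - 1)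
    (by intro i; have := hge i; push_cast [Nat.cast_sub (show 1 ≤ q ^ j * (i + 1) by omega)]; ring)
    (by intro i; exact (Nat.sub_le _ _).trans (by gcongr; omega))
    (by intro i; have := hge i; show 0 < q ^ j * (i + 1) - 1; omega)
    ((Nat.primesLE X).filter (fun p => q ^ j ∣ p + 1)) (by
      intro p hp
      rw [Finset.mem_filter, Nat.mem_primesLE] at hp
      obtain ⟨⟨hpX, hpp⟩, m, hm⟩ := hp
      have hm0 : m ≠ 0 := by rintro rfl; omega
      obtain ⟨i, rfl⟩ := Nat.exists_eq_succ_of_ne_zero hm0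
      refine ⟨hpp, i, ?_, ?_⟩
      · rw [← Nat.succ_le_iff, Nat.le_div_iff_mul_le (by omega), mul_comm]; omega
      · show p = q ^ j * (i.succ) - 1
        omega)
  have hlN : 0 ≤ Real.log (((X + 1) / q ^ j : ℕ) : ℝ) := Real.log_natCast_nonneg _
  have hu : (((Nat.primesLE X).filter (fun p => q ^ j ∣ p - 1 ∨ q ^ j ∣ p + 1)).card : ℝ) ≤
      ((Nat.primesLE X).filter (fun p => q ^ j ∣ p - 1)).card +
      ((Nat.primesLE X).filter (fun p => q ^ j ∣ p + 1)).card := by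
    rw [Finset.filter_or]; exact_mod_cast Finset.card_union_le _ _
  nlinarith

lemma T1_abel (Q M : ℕ) (hQ : 1 ≤ Q) (hM : Q ≤ M) :
    ∑ n ∈ (Finset.Ioc Q M).filter Nat.Prime, Real.log n / (n : ℝ) ^ 2 ≤
      Chebyshev.theta M / (M : ℝ) ^ 2 + 2 * Real.log 4 * (1 / Q - 1 / M) := by
  induction M, hM using Nat.le_induction with
  | base =>
    simp
    exact div_nonneg (Chebyshev.theta_nonneg _) (by positivity)
  | succ M hM ih =>
    have hth : Chebyshev.theta ((M + 1 : ℕ) : ℝ) =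
        Chebyshev.theta M + if (M + 1).Prime then Real.log ((M + 1 : ℕ) : ℝ) else 0 := by
      rw [Chebyshev.theta, Chebyshev.theta, Nat.floor_natCast, Nat.floor_natCast, Finset.sum_filter,
        Finset.sum_filter, Finset.sum_Ioc_succ_top (by omega)]
    rw [Finset.sum_filter, Finset.sum_Ioc_succ_top (by omega), ← Finset.sum_filter]
    have hM0 : (0 : ℝ) < M := by exact_mod_cast (by omega : 0 < M)
    have hle := Chebyshev.theta_le_log4_mul_x hM0.le
    have e : (if (M + 1).Prime then Real.log ((M + 1 : ℕ) : ℝ) / ((M + 1 : ℕ) : ℝ) ^ 2 else 0) =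
        (if (M + 1).Prime then Real.log ((M + 1 : ℕ) : ℝ) else 0) / ((M + 1 : ℕ) : ℝ) ^ 2 := by
      split_ifs <;> simp
    rw [e, hth, add_div]
    have key : Chebyshev.theta M * (1 / (M : ℝ) ^ 2 - 1 / ((M + 1 : ℕ) : ℝ) ^ 2) ≤
        2 * Real.log 4 * (1 / M - 1 / ((M + 1 : ℕ) : ℝ)) := by
      have e1 : (1 / (M : ℝ) ^ 2 - 1 / ((M + 1 : ℕ) : ℝ) ^ 2) =
        (2 * M + 1) / ((M : ℝ) ^ 2 * (M + 1) ^ 2) := by push_cast; field_simp; ring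
      have e2 : (1 / (M : ℝ) - 1 / ((M + 1 : ℕ) : ℝ)) = 1 / ((M : ℝ) * (M + 1)) := by
        push_cast; field_simp; ring
      rw [e1, e2]
      calc _ ≤ (Real.log 4 * M) * ((2 * M + 1) / ((M : ℝ) ^ 2 * (M + 1) ^ 2)) := by gcongr
        _ = Real.log 4 * ((2 * M + 1) / (M * (M + 1) ^ 2)) := by field_simp
        _ ≤ Real.log 4 * (2 * (M + 1) / (M * (M + 1) ^ 2)) := by
          have : 0 < Real.log 4 := Real.log_pos (by norm_num)
          gcongr; linarith
        _ = _ := by field_simp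
    have : Chebyshev.theta M * (1 / (M : ℝ) ^ 2 - 1 / ((M + 1 : ℕ) : ℝ) ^ 2) =
      Chebyshev.theta M / (M : ℝ) ^ 2 - Chebyshev.theta M / ((M + 1 : ℕ) : ℝ) ^ 2 := by ring
    linarith

lemma T1_abel' (Q M : ℕ) (hQ : 1 ≤ Q) (hM : Q ≤ M) :
    ∑ n ∈ (Finset.Ioc Q M).filter Nat.Prime, Real.log n / (n : ℝ) ^ 2 ≤ 3 / Q := by
  have h := T1_abel Q M hQ hM
  have hM0 : (0 : ℝ) < M := by exact_mod_cast (by omega : 0 < M)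
  have hQ0 : (0 : ℝ) < Q := by exact_mod_cast (by omega : 0 < Q)
  have hle := Chebyshev.theta_le_log4_mul_x hM0.le
  have h4 : Real.log 4 < 1.4 := by
    rw [show (4:ℝ) = 2 ^ 2 by norm_num, Real.log_pow]; have := Real.log_two_lt_d9
    push_cast; linarith
  have h40 : 0 < Real.log 4 := Real.log_pos (by norm_num)
  have : Chebyshev.theta M / (M : ℝ) ^ 2 ≤ Real.log 4 * (1 / M) := by
    rw [div_le_iff₀ (by positivity)]
    calc _ ≤ _ := hle
      _ = _ := by field_simp
  have h1M : 0 < 1 / (M : ℝ) := by positivity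
  have h1Q : 0 < 1 / (Q : ℝ) := by positivity
  have : 3 / (Q : ℝ) = 3 * (1 / Q) := by ring
  nlinarith

/-- the modulus attached to the prime `q` -/
def T1_e (Y q : ℕ) : ℕ := if q = 2 then Nat.log 2 Y else Nat.log q Y + 1

lemma T1_sum (y : ℝ) (hy : 16 ≤ y) :
    ∑ q ∈ Nat.primesLE ⌊y⌋₊, 1 / ((q ^ T1_e ⌊y⌋₊ q : ℕ) : ℝ) ≤ 32 / (√y * Real.log y) := by
  set Y := ⌊y⌋₊ with hY
  have hY16 : 16 ≤ Y := Nat.le_floor (by exact_mod_cast hy)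
  have hs4 : 4 ≤ √y := Real.le_sqrt_of_sq_le (by norm_num; linarith)
  have hsq : √y * √y = y := Real.mul_self_sqrt (by linarith)
  set Q := ⌊√y⌋₊ with hQ
  have hQ4 : 4 ≤ Q := Nat.le_floor (by exact_mod_cast hs4)
  have hQY : Q ≤ Y := Nat.floor_mono (by nlinarith)
  have hQle : (Q : ℝ) ≤ √y := Nat.floor_le (by linarith)
  have hQlt : √y < Q + 1 := Nat.lt_floor_add_one _
  have hYlt : y < Y + 1 := Nat.lt_floor_add_one _
  have hlog : 0 < Real.log y := Real.log_pos (by linarith)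
  have hlogs : Real.log √y = Real.log y / 2 := Real.log_sqrt (by linarith)
  have hsplit : Nat.primesLE Y = Nat.primesLE Q ∪ (Finset.Ioc Q Y).filter Nat.Prime := by
    ext p
    simp only [Finset.mem_union, Nat.mem_primesLE, Finset.mem_filter, Finset.mem_Ioc]
    constructor
    · rintro ⟨h1, h2⟩
      by_cases h : p ≤ Q
      · exact Or.inl ⟨h, h2⟩
      · exact Or.inr ⟨⟨by omega, h1⟩, h2⟩
    · rintro (⟨h1, h2⟩ | ⟨⟨_, h1⟩, h2⟩)
      · exact ⟨h1.trans hQY, h2⟩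
      · exact ⟨h1, h2⟩
  have hdisj : Disjoint (Nat.primesLE Q) ((Finset.Ioc Q Y).filter Nat.Prime) := by
    rw [Finset.disjoint_left]
    intro p hp hp'
    simp only [Nat.mem_primesLE, Finset.mem_filter, Finset.mem_Ioc] at hp hp'
    omega
  rw [hsplit, Finset.sum_union hdisj]
  have hsmall : ∑ q ∈ Nat.primesLE Q, 1 / ((q ^ T1_e Y q : ℕ) : ℝ) ≤ 20 / (√y * Real.log y) := by
    have hb : ∀ q ∈ Nat.primesLE Q, 1 / ((q ^ T1_e Y q : ℕ) : ℝ) ≤ 2 / y := by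
      intro q hq
      obtain ⟨hqQ, hqp⟩ := Nat.mem_primesLE.mp hq
      have hge : Y + 1 ≤ 2 * q ^ T1_e Y q := by
        unfold T1_e
        split_ifs with h
        · subst h
          have := Nat.lt_pow_succ_log_self (b := 2) (by norm_num) Y
          rw [pow_succ] at this; omega
        · have := Nat.lt_pow_succ_log_self hqp.one_lt Y
          rw [Nat.succ_eq_add_one] at this
          omega
      have hge' : y ≤ 2 * ((q ^ T1_e Y q : ℕ) : ℝ) := by
        have : ((Y + 1 : ℕ) : ℝ) ≤ ((2 * q ^ T1_e Y q : ℕ) : ℝ) := by exact_mod_cast hge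
        push_cast at this ⊢
        linarith
      have hp : (0 : ℝ) < ((q ^ T1_e Y q : ℕ) : ℝ) := by exact_mod_cast pow_pos hqp.pos _
      rw [div_le_div_iff₀ hp (by linarith)]
      linarith
    calc _ ≤ (Nat.primesLE Q).card • (2 / y) := Finset.sum_le_card_nsmul _ _ _ hb
      _ = (Nat.primeCounting Q : ℝ) * (2 / y) := by
        rw [nsmul_eq_mul, Nat.primesLE_card_eq_primeCounting]
      _ ≤ (10 * √y / Real.log y) * (2 / y) := by
        have := T1_pi_le (x := √y) (by linarith)
        rw [hlogs] at this
        gcongr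
        rw [le_div_iff₀ hlog]
        linarith
      _ = (20 * √y) / (Real.log y * (√y * √y)) := by rw [hsq]; field_simp; norm_num
      _ = _ := by field_simp
  have hlarge : ∑ q ∈ (Finset.Ioc Q Y).filter Nat.Prime, 1 / ((q ^ T1_e Y q : ℕ) : ℝ) ≤
      12 / (√y * Real.log y) := by
    have hb : ∀ q ∈ (Finset.Ioc Q Y).filter Nat.Prime, 1 / ((q ^ T1_e Y q : ℕ) : ℝ) ≤
        (2 / Real.log y) * (Real.log q / (q : ℝ) ^ 2) := by
      intro q hq
      simp only [Finset.mem_filter, Finset.mem_Ioc] at hq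
      obtain ⟨⟨h1, h2⟩, hqp⟩ := hq
      have hq2 : q ≠ 2 := by omega
      have hge : q ^ 2 ≤ q ^ T1_e Y q := by
        apply Nat.pow_le_pow_right hqp.pos
        simp only [T1_e, hq2, if_false]
        have := Nat.log_pos hqp.one_lt h2
        omega
      have hge' : (q : ℝ) ^ 2 ≤ ((q ^ T1_e Y q : ℕ) : ℝ) := by exact_mod_cast hge
      have hq0 : (0 : ℝ) < q := by exact_mod_cast hqp.pos
      have hlq : Real.log y / 2 ≤ Real.log q := by
        rw [← hlogs]
        apply Real.log_le_log (by linarith)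
        have : ((Q + 1 : ℕ) : ℝ) ≤ q := by exact_mod_cast h1
        push_cast at this; linarith
      calc _ ≤ 1 / (q : ℝ) ^ 2 := by gcongr
        _ = (2 / Real.log y) * ((Real.log y / 2) / (q : ℝ) ^ 2) := by field_simp
        _ ≤ _ := by gcongr
    calc _ ≤ ∑ q ∈ (Finset.Ioc Q Y).filter Nat.Prime,
          (2 / Real.log y) * (Real.log q / (q : ℝ) ^ 2) := Finset.sum_le_sum hb
      _ ≤ (2 / Real.log y) * (3 / Q) := by
        rw [← Finset.mul_sum]
        have := T1_abel' Q Y (by omega) hQY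
        gcongr
      _ ≤ (2 / Real.log y) * (3 / (√y / 2)) := by
        gcongr
        linarith
      _ = _ := by field_simp; norm_num
  calc _ ≤ 20 / (√y * Real.log y) + 12 / (√y * Real.log y) := add_le_add hsmall hlarge
    _ = _ := by ring

lemma T1_local (y : ℝ) (hy : 16 ≤ y) (p : ℕ) (hp : p.Prime) (h : ¬ Dy y (p ^ 2 - 1) ∣ Ly y) :
    ∃ q ∈ Nat.primesLE ⌊y⌋₊, q ^ T1_e ⌊y⌋₊ q ∣ p - 1 ∨ q ^ T1_e ⌊y⌋₊ q ∣ p + 1 := by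
  by_contra! hcon
  apply h
  unfold Dy
  apply Finset.prod_dvd_of_isRelPrime
  · intro a ha b hb hab
    simp only [Finset.coe_filter, Set.mem_ofPred_eq] at ha hb
    exact Nat.coprime_iff_isRelPrime.mp (Nat.Coprime.pow _ _
      ((Nat.coprime_primes (Nat.prime_of_mem_primeFactors ha.1)
      (Nat.prime_of_mem_primeFactors hb.1)).mpr hab))
  · intro q hq
    simp only [Finset.mem_filter] at hq
    have hqp := Nat.prime_of_mem_primeFactors hq.1
    have hqY : q ≤ ⌊y⌋₊ := Nat.le_floor hq.2
    have hc := hcon q (Nat.mem_primesLE.mpr ⟨hqY, hqp⟩)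
    by_cases hle : (p ^ 2 - 1).factorization q ≤ Nat.log q ⌊y⌋₊
    · apply Finset.dvd_lcm (f := id)
      rw [Finset.mem_Icc]
      exact ⟨pow_pos hqp.pos _, Nat.pow_le_of_le_log (by have := hqp.pos; omega) hle⟩
    exfalso
    have hdv : q ^ (Nat.log q ⌊y⌋₊ + 1) ∣ p ^ 2 - 1 :=
      (pow_dvd_pow q (by omega)).trans (Nat.ordProj_dvd _ _)
    have hfac : p ^ 2 - 1 = (p + 1) * (p - 1) := by simpa using Nat.sq_sub_sq p 1
    rw [hfac] at hdv
    have hp2 := hp.two_le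
    by_cases hq2 : q = 2
    · subst hq2
      simp only [T1_e, if_true] at hc
      have h4 : 4 ≤ Nat.log 2 ⌊y⌋₊ := by
        apply Nat.le_log_of_pow_le (by norm_num)
        exact Nat.le_floor (by norm_num; linarith)
      obtain ⟨k, hk⟩ := Nat.exists_eq_add_of_le h4
      rw [hk] at hdv hc
      have hodd : p % 2 = 1 := by
        rcases hp.eq_two_or_odd with h | h
        · subst h
          exfalso
          have : 2 ∣ 3 := (dvd_pow_self 2 (by omega)).trans hdv
          omega
        · exact h
      obtain ⟨u, hu⟩ : ∃ u, p = 2 * u + 1 := ⟨p / 2, by omega⟩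
      subst hu
      have e1 : (2 * u + 1 + 1) * (2 * u + 1 - 1) = 4 * ((u + 1) * u) := by
        rw [Nat.add_sub_cancel]; ring
      have e2 : 2 ^ (4 + k + 1) = 4 * 2 ^ (k + 3) := by ring
      rw [e1, e2] at hdv
      have hdv := Nat.dvd_of_mul_dvd_mul_left (by norm_num) hdv
      have e3 : 2 ^ (4 + k) = 2 * 2 ^ (k + 3) := by ring
      rw [e3] at hc
      have hcop : Nat.Coprime (u + 1) u := by simp
      rcases (hcop.isPrimePow_dvd_mul (Nat.prime_two.isPrimePow.pow (by omega))).mp hdv with h | h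
      · apply hc.2
        rw [show 2 * u + 1 + 1 = 2 * (u + 1) by ring]
        exact Nat.mul_dvd_mul_left 2 h
      · apply hc.1
        rw [Nat.add_sub_cancel]
        exact Nat.mul_dvd_mul_left 2 h
    · simp only [T1_e, hq2, if_false] at hc
      by_cases hd : q ∣ p + 1
      · have : ¬ q ∣ p - 1 := by
          intro h'
          have := Nat.dvd_sub hd h'
          rw [show p + 1 - (p - 1) = 2 by omega] at this
          exact hq2 ((Nat.prime_dvd_prime_iff_eq hqp Nat.prime_two).mp this)
        exact hc.2 (((Nat.Prime.coprime_iff_not_dvd hqp).mpr this).pow_left _ |>.dvd_of_dvd_mul_right hdv)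
      · exact hc.1 (((Nat.Prime.coprime_iff_not_dvd hqp).mpr hd).pow_left _ |>.dvd_of_dvd_mul_left hdv)

lemma T1_e_pos (Y q : ℕ) (hY : 16 ≤ Y) : 1 ≤ T1_e Y q := by
  unfold T1_e
  split_ifs
  · exact Nat.log_pos (by norm_num) (by omega)
  · omega

lemma T1_e_le (Y q : ℕ) (hY : 16 ≤ Y) (hq : q ≤ Y) : q ^ T1_e Y q ≤ Y ^ 2 := by
  unfold T1_e
  split_ifs with h
  · subst h
    have := Nat.pow_log_le_self 2 (show Y ≠ 0 by omega)
    nlinarith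
  · have := Nat.pow_log_le_self q (show Y ≠ 0 by omega)
    rw [pow_succ]
    nlinarith

lemma T1_countq (x y : ℝ) (hx : 16 ≤ x) (hy : 16 ≤ y) (hxy : y ^ 2 * (√x + 1) ≤ x)
    (q : ℕ) (hq : q ∈ Nat.primesLE ⌊y⌋₊) :
    (((Nat.primesLE ⌊x⌋₊).filter (fun p => q ^ T1_e ⌊y⌋₊ q ∣ p - 1 ∨
      q ^ T1_e ⌊y⌋₊ q ∣ p + 1)).card : ℝ) ≤
      (80 * x * Real.log y / Real.log x) * (1 / ((q ^ T1_e ⌊y⌋₊ q : ℕ) : ℝ)) := by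
  set Y := ⌊y⌋₊ with hY
  set X := ⌊x⌋₊ with hX
  obtain ⟨hqY, hqp⟩ := Nat.mem_primesLE.mp hq
  have hY16 : 16 ≤ Y := Nat.le_floor (by exact_mod_cast hy)
  have hYle : (Y : ℝ) ≤ y := Nat.floor_le (by linarith)
  have hXle : (X : ℝ) ≤ x := Nat.floor_le (by linarith)
  have hXlt : x < X + 1 := Nat.lt_floor_add_one _
  have hepos := T1_e_pos Y q hY16
  set j := T1_e Y q with hj
  have hd0 : 0 < q ^ j := pow_pos hqp.pos _
  have hd0' : (0 : ℝ) < ((q ^ j : ℕ) : ℝ) := by exact_mod_cast hd0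
  have hd1' : (1 : ℝ) ≤ ((q ^ j : ℕ) : ℝ) := by exact_mod_cast hd0
  have hdle : ((q ^ j : ℕ) : ℝ) ≤ y ^ 2 := by
    have : ((q ^ j : ℕ) : ℝ) ≤ ((Y ^ 2 : ℕ) : ℝ) := by exact_mod_cast T1_e_le Y q hY16 hqY
    push_cast at this ⊢
    nlinarith
  set d := q ^ j with hdd
  set N := (X + 1) / d with hN
  have hs4 : 4 ≤ √x := Real.le_sqrt_of_sq_le (by norm_num; linarith)
  have hNlt : ((X : ℝ) + 1) < (N + 1) * d := by
    have : X + 1 < (N + 1) * d := by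
      rw [mul_comm]; exact Nat.lt_mul_div_succ (X + 1) hd0
    exact_mod_cast this
  have hNle : (N : ℝ) * d ≤ X + 1 := by
    exact_mod_cast Nat.div_mul_le_self (X + 1) d
  have hNs : √x ≤ N := by
    by_contra! hlt
    have : ((N : ℝ) + 1) * d ≤ (√x + 1) * y ^ 2 := by gcongr
    linarith
  have hN2 : 2 ≤ N := by
    have : (2 : ℝ) ≤ N := by linarith
    exact_mod_cast this
  have hc := T1_count q j X hqp hepos hN2
  rw [← hdd, ← hN] at hc
  have hlx : 0 < Real.log x := Real.log_pos (by linarith)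
  have hlN : Real.log x / 2 ≤ Real.log N := by
    rw [← Real.log_sqrt (by linarith)]
    exact Real.log_le_log (by linarith) hNs
  have hly : 1 ≤ Real.log y := by
    rw [Real.le_log_iff_exp_le (by linarith)]
    linarith [Real.exp_one_lt_d9]
  have hld : Real.log (d : ℝ) ≤ 2 * Real.log y := by
    have := Real.log_le_log hd0' hdle
    rwa [Real.log_pow] at this
  have hN2x : (N : ℝ) ≤ 2 * x / d := by
    rw [le_div_iff₀ hd0']; linarith
  set K : ℝ := (((Nat.primesLE X).filter (fun p => d ∣ p - 1 ∨ d ∣ p + 1)).card : ℝ) with hK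
  have hK0 : 0 ≤ K := Nat.cast_nonneg _
  have h1 : K * (Real.log x / 2) ≤ 2 * ((2 * x / d) * (10 * Real.log y)) := by
    calc _ ≤ K * Real.log N := by gcongr
      _ ≤ _ := hc
      _ ≤ 2 * ((2 * x / d) * (10 * Real.log y)) := by
        have : 6 + 2 * Real.log (d : ℝ) ≤ 10 * Real.log y := by linarith
        have : 0 ≤ Real.log (d : ℝ) := Real.log_natCast_nonneg _
        gcongr
  have h2 : (80 * x * Real.log y / Real.log x) * (1 / (d : ℝ)) =
      (2 * ((2 * x / d) * (10 * Real.log y))) / (Real.log x / 2) := by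
    field_simp; norm_num
  rw [h2, le_div_iff₀ (by positivity)]
  exact h1

lemma T1_main (x y : ℝ) (hx : 16 ≤ x) (hy : 16 ≤ y) (hxy : y ^ 2 * (√x + 1) ≤ x) :
    ({p : ℕ | p.Prime ∧ (p : ℝ) ≤ x ∧ ¬ Dy y (p ^ 2 - 1) ∣ Ly y}.ncard : ℝ) ≤
      2560 * x / (√y * Real.log x) := by
  classical
  set F : ℕ → Finset ℕ := fun q => (Nat.primesLE ⌊x⌋₊).filter (fun p => q ^ T1_e ⌊y⌋₊ q ∣ p - 1 ∨
      q ^ T1_e ⌊y⌋₊ q ∣ p + 1) with hF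
  have hsub : {p : ℕ | p.Prime ∧ (p : ℝ) ≤ x ∧ ¬ Dy y (p ^ 2 - 1) ∣ Ly y} ⊆
      (((Nat.primesLE ⌊y⌋₊).biUnion F : Finset ℕ) : Set ℕ) := by
    rintro p ⟨hp, hpx, hn⟩
    obtain ⟨q, hq, h⟩ := T1_local y hy p hp hn
    simp only [Finset.coe_biUnion, Set.mem_iUnion]
    refine ⟨q, hq, ?_⟩
    simp only [hF, Finset.coe_filter, Set.mem_ofPred_eq, Nat.mem_primesLE]
    exact ⟨⟨Nat.le_floor hpx, hp⟩, h⟩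
  have h1 := Set.ncard_le_ncard hsub (Finset.finite_toSet _)
  rw [Set.ncard_coe_finset] at h1
  have h2 := h1.trans Finset.card_biUnion_le
  have h3 : ({p : ℕ | p.Prime ∧ (p : ℝ) ≤ x ∧ ¬ Dy y (p ^ 2 - 1) ∣ Ly y}.ncard : ℝ) ≤
      ∑ q ∈ Nat.primesLE ⌊y⌋₊, ((F q).card : ℝ) := by exact_mod_cast h2
  have hlx : 0 < Real.log x := Real.log_pos (by linarith)
  have hly : 0 < Real.log y := Real.log_pos (by linarith)
  have hsy : 0 < √y := Real.sqrt_pos.mpr (by linarith)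
  calc _ ≤ _ := h3
    _ ≤ ∑ q ∈ Nat.primesLE ⌊y⌋₊,
        (80 * x * Real.log y / Real.log x) * (1 / ((q ^ T1_e ⌊y⌋₊ q : ℕ) : ℝ)) :=
      Finset.sum_le_sum fun q hq => T1_countq x y hx hy hxy q hq
    _ ≤ (80 * x * Real.log y / Real.log x) * (32 / (√y * Real.log y)) := by
      rw [← Finset.mul_sum]
      have := T1_sum y hy
      gcongr
    _ = _ := by field_simp; norm_num

lemma T1_ev : ∀ᶠ x : ℝ in atTop, 16 ≤ x ∧ 16 ≤ Real.log (Real.log x) ∧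
    (Real.log (Real.log x)) ^ 2 * (√x + 1) ≤ x := by
  have hll : Tendsto (fun x : ℝ => Real.log (Real.log x)) atTop atTop :=
    Real.tendsto_log_atTop.comp Real.tendsto_log_atTop
  have hlo := (isLittleO_log_rpow_atTop (show (0:ℝ) < 1/4 by norm_num)).bound
    (show (0:ℝ) < 1/2 by norm_num)
  filter_upwards [eventually_ge_atTop 16, hll.eventually_ge_atTop 16, hlo] with x hx hy hb
  refine ⟨hx, hy, ?_⟩
  have hlx : 0 ≤ Real.log x := Real.log_nonneg (by linarith)
  rw [Real.norm_of_nonneg hlx, Real.norm_of_nonneg (by positivity)] at hb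
  have hyl : Real.log (Real.log x) ≤ Real.log x := Real.log_le_self hlx
  have hr : (x ^ (1/4 : ℝ)) ^ 2 = √x := by
    rw [← Real.rpow_natCast, ← Real.rpow_mul (by linarith), Real.sqrt_eq_rpow]; norm_num
  have hsq : √x * √x = x := Real.mul_self_sqrt (by linarith)
  have hs4 : 4 ≤ √x := Real.le_sqrt_of_sq_le (by norm_num; linarith)
  have h2 : (Real.log (Real.log x)) ^ 2 ≤ (1/2 * x ^ (1/4 : ℝ)) ^ 2 :=
    pow_le_pow_left₀ (by linarith) (hyl.trans hb) 2
  rw [mul_pow, hr] at h2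
  nlinarith

lemma T1_pi_ge : ∀ᶠ x : ℝ in atTop, x / (4 * Real.log x) ≤ (Nat.primeCounting ⌊x⌋₊ : ℝ) := by
  have hlo := Real.isLittleO_log_id_atTop.bound (show (0:ℝ) < 1/10 by norm_num)
  filter_upwards [eventually_ge_atTop 100, hlo] with x hx hb
  have hlx : 0 < Real.log x := Real.log_pos (by linarith)
  rw [Real.norm_of_nonneg hlx.le, id, Real.norm_of_nonneg (by linarith)] at hb
  refine le_trans ?_ (Chebyshev.pi_ge' (by linarith))
  rw [← div_div]
  gcongr
  have h2 := Real.log_two_gt_d9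
  have h3 : Real.log (x + 2) ≤ Real.log 2 + Real.log x := by
    rw [← Real.log_mul (by norm_num) (by linarith)]
    exact Real.log_le_log (by linarith) (by linarith)
  have := Real.log_two_lt_d9
  nlinarith

theorem type1_inconvenient_primes :
    (∃ C : ℝ, 0 < C ∧ ∀ᶠ x : ℝ in atTop,
      ({p : ℕ | p.Prime ∧ (p : ℝ) ≤ x ∧
          ¬ Dy (Real.log (Real.log x)) (p ^ 2 - 1) ∣ Ly (Real.log (Real.log x))}.ncard : ℝ) ≤
        C * x / (Real.sqrt (Real.log (Real.log x)) * Real.log x)) ∧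
    Tendsto (fun x : ℝ =>
      ({p : ℕ | p.Prime ∧ (p : ℝ) ≤ x ∧
          ¬ Dy (Real.log (Real.log x)) (p ^ 2 - 1) ∣ Ly (Real.log (Real.log x))}.ncard : ℝ) /
        (Nat.primeCounting ⌊x⌋₊ : ℝ)) atTop (𝓝 0) := by
  refine ⟨⟨2560, by norm_num, ?_⟩, ?_⟩
  · filter_upwards [T1_ev] with x ⟨hx, hy, hxy⟩
    exact T1_main x _ hx hy hxy
  · have hll : Tendsto (fun x : ℝ => √(Real.log (Real.log x))) atTop atTop :=
      Real.tendsto_sqrt_atTop.comp (Real.tendsto_log_atTop.comp Real.tendsto_log_atTop)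
    have hlim : Tendsto (fun x : ℝ => 10240 / √(Real.log (Real.log x))) atTop (𝓝 0) :=
      hll.const_div_atTop 10240
    refine tendsto_of_tendsto_of_tendsto_of_le_of_le' tendsto_const_nhds hlim ?_ ?_
    · exact Eventually.of_forall fun x => by positivity
    · filter_upwards [T1_ev, T1_pi_ge] with x ⟨hx, hy, hxy⟩ hpi
      have hm := T1_main x _ hx hy hxy
      have hlx : 0 < Real.log x := Real.log_pos (by linarith)
      have hx0 : 0 < x := by linarith
      have hsy : 0 < √(Real.log (Real.log x)) := Real.sqrt_pos.mpr (by linarith)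
      have hp0 : 0 < x / (4 * Real.log x) := by positivity
      rw [div_le_iff₀ (lt_of_lt_of_le hp0 hpi)]
      calc _ ≤ _ := hm
        _ = 10240 / √(Real.log (Real.log x)) * (x / (4 * Real.log x)) := by
          field_simp; norm_num
        _ ≤ _ := by gcongr
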